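/- Let λ_c(β) = sup_{c ∈ (e^{-2/β}, 1)} 4βc²(-ln c)(1 + (1/2)β ln c) for β > 0. Then λ_c(β) < 2 for every β > 0, and λ_c(β) → 2 as β → ∞. -/

import Mathlib

open Real Set Filter

/-- The critical heating parameter λ_c(β) for the voltage-controlled radial problem. -/
noncomputable def lambdaCrit (β : ℝ) : ℝ :=
  sSup ((fun c : ℝ => 4 * β * c ^ 2 * (-Real.log c) * (1 + β * Real.log c / 2)) ''
    Set.Ioo (Real.exp (-2 / β)) 1)

/-!
Completing the square in `β log c` turns the objective into `2 c² (1 - (1 + β log c)²)`. It is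
therefore at most `2 c²`, with equality at `c = exp (-1 / β)`, and this value `2 exp (-2 / β)` is a
lower bound for the supremum which tends to `2`. At `c = 1` the objective vanishes, so it stays
below `2` on the *closed* interval `[exp (-2 / β), 1]`; by compactness so does its supremum.
-/

/-- The heating parameter `λ` of the steady state with parameter `c`, the function of `c` whose
supremum is `lambdaCrit β`. -/
noncomputable def steadyHeating (β c : ℝ) : ℝ :=
  4 * β * c ^ 2 * (-log c) * (1 + β * log c / 2)

lemma lambdaCrit_eq_sSup_steadyHeating (β : ℝ) :
    lambdaCrit β = sSup (steadyHeating β '' Ioo (exp (-2 / β)) 1) :=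
  rfl

lemma steadyHeating_eq_two_mul_sq_mul (β c : ℝ) :
    steadyHeating β c = 2 * c ^ 2 * (1 - (1 + β * log c) ^ 2) := by
  unfold steadyHeating
  ring

lemma steadyHeating_le_two_mul_sq (β c : ℝ) : steadyHeating β c ≤ 2 * c ^ 2 := by
  rw [steadyHeating_eq_two_mul_sq_mul]
  exact mul_le_of_le_one_right (by positivity) (sub_le_self 1 (sq_nonneg _))

lemma steadyHeating_one (β : ℝ) : steadyHeating β 1 = 0 := by
  simp [steadyHeating]

lemma steadyHeating_lt_two (β : ℝ) {c : ℝ} (hc₀ : 0 ≤ c) (hc₁ : c ≤ 1) :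
    steadyHeating β c < 2 := by
  rcases hc₁.eq_or_lt with rfl | hc
  · simp only [steadyHeating_one, Nat.ofNat_pos]
  · calc steadyHeating β c ≤ 2 * c ^ 2 := steadyHeating_le_two_mul_sq β c
      _ < 2 := mul_lt_of_lt_one_right two_pos (pow_lt_one₀ hc₀ hc two_ne_zero)

lemma steadyHeating_exp_neg_one_div {β : ℝ} (hβ : β ≠ 0) :
    steadyHeating β (exp (-1 / β)) = 2 * exp (-2 / β) := by
  have hsquare : 1 + β * (-1 / β) = 0 := by field_simp; ring
  have hexp : exp (-1 / β) ^ 2 = exp (-2 / β) := by rw [← exp_nat_mul]; congr 1; ring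
  rw [steadyHeating_eq_two_mul_sq_mul, log_exp, hsquare, hexp]
  ring

lemma continuousOn_steadyHeating (β : ℝ) : ContinuousOn (steadyHeating β) {0}ᶜ := by
  unfold steadyHeating
  fun_prop (disch := simp)

lemma exp_neg_one_div_mem_Ioo {β : ℝ} (hβ : 0 < β) :
    exp (-1 / β) ∈ Ioo (exp (-2 / β)) 1 :=
  ⟨exp_lt_exp.2 (div_lt_div_of_pos_right (by norm_num) hβ),
    exp_lt_one_iff.2 (div_neg_of_neg_of_pos (by norm_num) hβ)⟩

lemma lambdaCrit_lt_two {β : ℝ} (hβ : 0 < β) : lambdaCrit β < 2 := by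
  have hmem := exp_neg_one_div_mem_Ioo hβ
  have hcont : ContinuousOn (steadyHeating β) (Icc (exp (-2 / β)) 1) :=
    (continuousOn_steadyHeating β).mono fun c hc => ((exp_pos _).trans_le hc.1).ne'
  calc lambdaCrit β = sSup (steadyHeating β '' Ioo (exp (-2 / β)) 1) :=
        lambdaCrit_eq_sSup_steadyHeating β
    _ ≤ sSup (steadyHeating β '' Icc (exp (-2 / β)) 1) :=
        csSup_le_csSup (isCompact_Icc.bddAbove_image hcont) ⟨_, mem_image_of_mem _ hmem⟩
          (image_mono Ioo_subset_Icc_self)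
    _ < 2 :=
        (isCompact_Icc.sSup_lt_iff_of_continuous ⟨_, Ioo_subset_Icc_self hmem⟩ hcont 2).2
          fun _ hc => steadyHeating_lt_two β ((exp_pos _).le.trans hc.1) hc.2

lemma steadyHeating_le_lambdaCrit {β c : ℝ} (hc : c ∈ Ioo (exp (-2 / β)) 1) :
    steadyHeating β c ≤ lambdaCrit β := by
  refine le_csSup ⟨2, ?_⟩ (mem_image_of_mem (steadyHeating β) hc)
  rintro _ ⟨x, hx, rfl⟩
  exact (steadyHeating_lt_two β ((exp_pos _).trans hx.1).le hx.2.le).le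

lemma two_mul_exp_le_lambdaCrit {β : ℝ} (hβ : 0 < β) : 2 * exp (-2 / β) ≤ lambdaCrit β :=
  (steadyHeating_exp_neg_one_div hβ.ne').symm.trans_le
    (steadyHeating_le_lambdaCrit (exp_neg_one_div_mem_Ioo hβ))

lemma tendsto_exp_const_div_atTop (a : ℝ) :
    Tendsto (fun x : ℝ => exp (a / x)) atTop (nhds 1) := by
  simpa only [id, exp_zero] using (tendsto_id.const_div_atTop a).rexp

/-- λ_c(β) < 2 for every β > 0, and λ_c(β) → 2 as β → ∞. -/
theorem lambdaCrit_large_beta :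
    (∀ β : ℝ, 0 < β → lambdaCrit β < 2) ∧
    Filter.Tendsto lambdaCrit Filter.atTop (nhds 2) := by
  refine ⟨fun β hβ => lambdaCrit_lt_two hβ, ?_⟩
  have hlower : Tendsto (fun β : ℝ => 2 * exp (-2 / β)) atTop (nhds 2) := by
    simpa only [mul_one] using (tendsto_exp_const_div_atTop (-2)).const_mul 2
  refine tendsto_of_tendsto_of_tendsto_of_le_of_le' hlower tendsto_const_nhds ?_ ?_
  · filter_upwards [eventually_gt_atTop 0] with β hβ using two_mul_exp_le_lambdaCrit hβ
  · filter_upwards [eventually_gt_atTop 0] with β hβ using (lambdaCrit_lt_two hβ).le
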